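/- Let γ > 1 be real and let n ≥ 1 be an integer. If w₀ ∈ ℂ satisfies Re w₀ > 0 and (1 − γ)·R_n(w₀) + 2·w₀²·R_n'(w₀) = 0, then Im w₀ = 0; that is, for γ > 1 the equation g_n(w) = ((1−γ)/(2w))R_n(w) + wR_n'(w) = 0 has no non-real roots in the right half-plane. -/

import Mathlib

/-- `R n z = ∑_{m=0}^{n} ((n+m)! / (m! (n-m)!)) z^m` for `z ∈ ℂ`. -/
noncomputable def R (n : ℕ) (z : ℂ) : ℂ :=
  ∑ m ∈ Finset.range (n + 1),
    ((Nat.factorial (n + m) : ℂ) / ((Nat.factorial m : ℂ) * (Nat.factorial (n - m) : ℂ))) * z ^ m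

/-- Coefficients of `R n`. -/
noncomputable def Rcoef (n m : ℕ) : ℂ :=
  if m ≤ n then ((Nat.factorial (n + m) : ℂ) / ((Nat.factorial m : ℂ) * (Nat.factorial (n - m) : ℂ)))
  else 0

/-- Polynomial version of `R n`. -/
noncomputable def Rpoly (n : ℕ) : Polynomial ℂ :=
  ∑ m ∈ Finset.range (n + 1), Polynomial.C (Rcoef n m) * Polynomial.X ^ m

lemma Rpoly_eval (n : ℕ) (z : ℂ) : (Rpoly n).eval z = R n z := by
  unfold Rpoly R
  rw [Polynomial.eval_finsetSum]
  refine Finset.sum_congr rfl fun m hm => ?_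
  have : m ≤ n := by simpa [Nat.lt_succ_iff] using hm
  simp [Rcoef, this]

lemma Rpoly_coeff (n m : ℕ) : (Rpoly n).coeff m = Rcoef n m := by
  unfold Rpoly
  rw [Polynomial.finsetSum_coeff]
  simp only [Polynomial.coeff_C_mul_X_pow]
  rw [Finset.sum_ite_eq]
  by_cases h : m ≤ n
  · simp [h]
  · simp [Rcoef, h]

lemma Rcoef_rec (n m : ℕ) :
    ((m : ℂ) + 1) * Rcoef n (m + 1) = ((n : ℂ) + m + 1) * ((n : ℂ) - m) * Rcoef n m := by
  rcases lt_trichotomy m n with h | h | h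
  · obtain ⟨k, rfl⟩ := Nat.exists_eq_add_of_lt h
    have e1 : m + k + 1 - (m + 1) = k := by omega
    have e2 : m + k + 1 - m = k + 1 := by omega
    have e3 : m + k + 1 + (m + 1) = (m + k + 1 + m) + 1 := by omega
    have l1 : m + 1 ≤ m + k + 1 := by omega
    have l2 : m ≤ m + k + 1 := by omega
    simp only [Rcoef, l1, l2, if_true, e1, e2, e3]
    rw [Nat.factorial_succ (m + k + 1 + m), Nat.factorial_succ m, Nat.factorial_succ k]
    have f1 : (Nat.factorial m : ℂ) ≠ 0 := by exact_mod_cast Nat.factorial_ne_zero _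
    have f2 : (Nat.factorial k : ℂ) ≠ 0 := by exact_mod_cast Nat.factorial_ne_zero _
    have f3 : (m : ℂ) + 1 ≠ 0 := by exact_mod_cast Nat.succ_ne_zero m
    have f4 : (k : ℂ) + 1 ≠ 0 := by exact_mod_cast Nat.succ_ne_zero k
    push_cast
    field_simp
    ring
  · subst h
    simp [Rcoef]
  · have l1 : ¬ (m + 1 ≤ n) := by omega
    have l2 : ¬ (m ≤ n) := by omega
    simp [Rcoef, l1, l2]

open Polynomial in
lemma Rpoly_ode (n : ℕ) :
    X ^ 2 * derivative (derivative (Rpoly n)) + 2 * (X * derivative (Rpoly n))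
      + derivative (Rpoly n) = C ((n : ℂ) * (n + 1)) * Rpoly n := by
  ext m
  have h2 : (2 : ℂ[X]) = C 2 := rfl
  have h := Rcoef_rec n m
  rw [h2]
  simp only [coeff_add, coeff_C_mul, pow_two, mul_assoc]
  rcases m with _ | _ | m
  · simp [coeff_derivative, Rpoly_coeff] at h ⊢
    linear_combination h
  · simp [coeff_derivative, Rpoly_coeff, coeff_X_mul] at h ⊢
    linear_combination h
  · simp [coeff_derivative, Rpoly_coeff, coeff_X_mul] at h ⊢
    linear_combination h

/-- For real `γ > 1` and `n ≥ 1`, any root `w₀` of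
`(1 − γ) R_n(w) + 2 w² R_n'(w) = 0` with `Re w₀ > 0` is real. -/
theorem root_is_real (γ : ℝ) (hγ : 1 < γ) (n : ℕ) (hn : 1 ≤ n) (w₀ : ℂ)
    (hre : 0 < w₀.re)
    (hroot : (1 - (γ : ℂ)) * R n w₀ + 2 * w₀ ^ 2 * deriv (R n) w₀ = 0) :
    w₀.im = 0 := by
  by_contra hb
  set P := Rpoly n with hP
  have hRfun : R n = fun z => P.eval z := by
    funext z; exact (Rpoly_eval n z).symm
  rw [hRfun] at hroot
  simp only [Polynomial.deriv] at hroot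
  have hw0 : w₀ ≠ 0 := by rintro rfl; simp at hre
  set D := Polynomial.derivative P with hD
  set v : ℝ → ℂ := fun x => w₀⁻¹ + x with hv
  have hvre : ∀ x, 0 ≤ x → 0 < (v x).re := by
    intro x hx
    have : 0 < (w₀⁻¹).re := by
      rw [Complex.inv_re]; exact div_pos hre (Complex.normSq_pos.2 hw0)
    simp [hv, -Complex.inv_re]; linarith
  have hv0 : ∀ x, 0 ≤ x → v x ≠ 0 := by
    intro x hx h
    have := hvre x hx
    rw [h] at this; simp at this
  set w : ℝ → ℂ := fun x => (v x)⁻¹ with hw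
  have hwre : ∀ x, 0 ≤ x → 0 < (w x).re := by
    intro x hx
    simp only [hw]
    rw [Complex.inv_re]; exact div_pos (hvre x hx) (Complex.normSq_pos.2 (hv0 x hx))
  have hwim : ∀ x, 0 ≤ x → 0 < w₀.im * (w x).im := by
    intro x hx
    have e : (v x).im = -w₀.im / Complex.normSq w₀ := by
      simp [hv, Complex.inv_im]
    have p1 := Complex.normSq_pos.2 (hv0 x hx)
    have p2 := Complex.normSq_pos.2 hw0
    simp only [hw]
    rw [Complex.inv_im, e]
    have : w₀.im * (-(-w₀.im / Complex.normSq w₀) / Complex.normSq (v x))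
      = w₀.im ^ 2 / (Complex.normSq w₀ * Complex.normSq (v x)) := by
      field_simp
    rw [this]
    positivity
  have hwd : ∀ x, 0 ≤ x → HasDerivAt w (-(w x) ^ 2) x := by
    intro x hx
    have h1 : HasDerivAt v 1 x := by
      simpa [hv] using (Complex.ofRealCLM.hasDerivAt (x := x)).const_add w₀⁻¹
    have := h1.fun_inv (hv0 x hx)
    refine HasDerivAt.congr_deriv this ?_
    simp [hw, div_eq_mul_inv]
  set f : ℝ → ℂ := fun x => P.eval (w x) with hf
  set g : ℝ → ℂ := fun x => -(w x) ^ 2 * D.eval (w x) with hg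
  set N : ℝ := (n : ℝ) * (n + 1) with hN
  have hNpos : 0 < N := by
    have : (1 : ℝ) ≤ n := by exact_mod_cast hn
    positivity
  have hfd : ∀ x, 0 ≤ x → HasDerivAt f (g x) x := by
    intro x hx
    have := (P.hasDerivAt (w x)).comp x (hwd x hx)
    refine HasDerivAt.congr_deriv this ?_
    simp only [hg, hD]; ring
  have hgd : ∀ x, 0 ≤ x → HasDerivAt g (N * (w x) ^ 2 * f x + g x) x := by
    intro x hx
    have h1 := (D.hasDerivAt (w x)).comp x (hwd x hx)
    have h2 := ((hwd x hx).fun_pow 2).fun_neg.fun_mul h1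
    have ode := congrArg (Polynomial.eval (w x)) (Rpoly_ode n)
    simp only [Polynomial.eval_add, Polynomial.eval_mul, Polynomial.eval_pow, Polynomial.eval_X,
      Polynomial.eval_C, ← hP, ← hD, Polynomial.eval_ofNat] at ode
    refine HasDerivAt.congr_deriv h2 ?_
    simp only [hg, hf, hN, Function.comp]
    push_cast
    linear_combination ((w x)^2) * ode
  set φ : ℝ → ℝ := fun x => w₀.im * (Real.exp (-x) *
    ((g x).im * (f x).re - (g x).re * (f x).im)) with hφ
  have hφd : ∀ x, 0 ≤ x → HasDerivAt φ
      (N * Real.exp (-x) * Complex.normSq (f x) * (2 * (w x).re * (w₀.im * (w x).im))) x := by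
    intro x hx
    have re_d : ∀ {u : ℝ → ℂ} {du : ℂ}, HasDerivAt u du x →
        HasDerivAt (fun y => (u y).re) du.re x := fun h =>
      (Complex.reCLM.hasFDerivAt.comp_hasDerivAt x h)
    have im_d : ∀ {u : ℝ → ℂ} {du : ℂ}, HasDerivAt u du x →
        HasDerivAt (fun y => (u y).im) du.im x := fun h =>
      (Complex.imCLM.hasFDerivAt.comp_hasDerivAt x h)
    have hE : HasDerivAt (fun y : ℝ => Real.exp (-y)) (Real.exp (-x) * (-1)) x :=
      (hasDerivAt_id x).fun_neg.exp
    have h1 := (((im_d (hgd x hx)).fun_mul (re_d (hfd x hx))).fun_sub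
      ((re_d (hgd x hx)).fun_mul (im_d (hfd x hx))))
    have h2 := (hE.fun_mul h1).const_mul w₀.im
    refine HasDerivAt.congr_deriv h2 ?_
    simp [Complex.normSq_apply, pow_two]
    ring
  have hpos : ∀ x, 0 ≤ x → 0 ≤
      N * Real.exp (-x) * Complex.normSq (f x) * (2 * (w x).re * (w₀.im * (w x).im)) := by
    intro x hx
    have := hwre x hx
    have := hwim x hx
    have := Complex.normSq_nonneg (f x)
    positivity
  have hmono : MonotoneOn φ (Set.Ici 0) := by
    apply monotoneOn_of_deriv_nonneg (convex_Ici 0)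
    · exact fun x hx => (hφd x hx).continuousAt.continuousWithinAt
    · intro x hx
      rw [interior_Ici] at hx
      exact (hφd x (le_of_lt hx)).differentiableAt.differentiableWithinAt
    · intro x hx
      rw [interior_Ici] at hx
      rw [(hφd x (le_of_lt hx)).deriv]
      exact hpos x (le_of_lt hx)
  have hφ0 : φ 0 = 0 := by
    have e0 : w 0 = w₀ := by simp [hw, hv]
    have eg : g 0 = ((1 - γ) / 2 : ℝ) * f 0 := by
      simp only [hg, hf, e0]
      push_cast
      linear_combination (-1/2) * hroot
    simp only [hφ]
    rw [eg, Complex.re_ofReal_mul, Complex.im_ofReal_mul]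
    ring
  have hwlim : Filter.Tendsto w Filter.atTop (nhds 0) := by
    have : Filter.Tendsto v Filter.atTop (Bornology.cobounded ℂ) := by
      rw [← tendsto_norm_atTop_iff_cobounded]
      refine Filter.tendsto_atTop_mono (f := fun x : ℝ => (w₀⁻¹).re + x) (fun x => ?_)
        (Filter.tendsto_atTop_add_const_left _ _ Filter.tendsto_id)
      refine le_trans ?_ (Complex.re_le_norm _)
      simp [hv]
    exact Filter.tendsto_inv₀_cobounded.comp this
  have hflim : Filter.Tendsto f Filter.atTop (nhds (P.eval 0)) :=
    (P.continuous.tendsto 0).comp hwlim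
  have hglim : Filter.Tendsto g Filter.atTop (nhds 0) := by
    have : Continuous (fun z : ℂ => -z ^ 2 * D.eval z) := by fun_prop
    have := (this.tendsto 0).comp hwlim
    simp only [ne_eq, OfNat.ofNat_ne_zero, not_false_eq_true, zero_pow, neg_zero, zero_mul] at this
    exact this
  have hP0 : P.eval 0 = 1 := by
    rw [← Polynomial.coeff_zero_eq_eval_zero, hP, Rpoly_coeff]
    have : (Nat.factorial n : ℂ) ≠ 0 := by exact_mod_cast Nat.factorial_ne_zero _
    simp [Rcoef, this]
  rw [hP0] at hflim
  have hφlim : Filter.Tendsto φ Filter.atTop (nhds 0) := by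
    have hE : Filter.Tendsto (fun x : ℝ => Real.exp (-x)) Filter.atTop (nhds 0) :=
      Real.tendsto_exp_neg_atTop_nhds_zero
    have r {u : ℝ → ℂ} {l : ℂ} (h : Filter.Tendsto u Filter.atTop (nhds l)) :
      Filter.Tendsto (fun x => (u x).re) Filter.atTop (nhds l.re) :=
      (Complex.continuous_re.tendsto l).comp h
    have i {u : ℝ → ℂ} {l : ℂ} (h : Filter.Tendsto u Filter.atTop (nhds l)) :
      Filter.Tendsto (fun x => (u x).im) Filter.atTop (nhds l.im) :=
      (Complex.continuous_im.tendsto l).comp h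
    have := (hE.mul (((i hglim).mul (r hflim)).sub ((r hglim).mul (i hflim)))).const_mul w₀.im
    simpa using this
  have hφz : ∀ x, 0 ≤ x → φ x = 0 := by
    intro x hx
    apply le_antisymm
    · refine ge_of_tendsto hφlim ?_
      filter_upwards [Filter.eventually_ge_atTop x] with y hy
      exact hmono hx (hx.trans hy) hy
    · rw [← hφ0]; exact hmono (Set.mem_Ici.2 le_rfl) hx hx
  have hfz : ∀ x, 0 < x → f x = 0 := by
    intro x hx
    have h1 : HasDerivAt φ 0 x := by
      refine (hasDerivAt_const x (0 : ℝ)).congr_of_eventuallyEq ?_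
      filter_upwards [lt_mem_nhds hx] with y hy
      exact hφz y hy.le
    have h2 := h1.unique (hφd x hx.le)
    have p1 := hwre x hx.le
    have p2 := hwim x hx.le
    by_contra hne
    have p3 := Complex.normSq_pos.2 hne
    have : 0 < N * Real.exp (-x) * Complex.normSq (f x) *
      (2 * (w x).re * (w₀.im * (w x).im)) := by positivity
    linarith
  have hf0 : Filter.Tendsto f Filter.atTop (nhds 0) := by
    refine tendsto_const_nhds.congr' ?_
    filter_upwards [Filter.eventually_gt_atTop 0] with y hy
    exact (hfz y hy).symm
  exact one_ne_zero (tendsto_nhds_unique hflim hf0)
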